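/- Let f : ℝ^d → ℝ be a convex function, S an invertible d × d real matrix, and let μ_{ij} and μ^S_{ij} be the second derivative measures of f and of x ↦ f(Sx) respectively. Then for every bounded Borel set A ⊆ ℝ^d, the matrix-valued identity μ^S(S^{−1}A) = (1/|det S|) · Sᵀ μ(A) S holds, where μ(A) denotes the matrix (μ_{ij}(A))_{ij} and μ^S(S^{−1}A) the matrix (μ^S_{ij}(S^{−1}A))_{ij}. -/

import Mathlib

open MeasureTheory Filter Metric
open scoped Topology ENNReal NNReal

/-- The second partial derivative `∂_i ∂_j φ` at `x`. -/
noncomputable def secondPartial (d : ℕ) (φ : EuclideanSpace ℝ (Fin d) → ℝ)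
    (i j : Fin d) (x : EuclideanSpace ℝ (Fin d)) : ℝ :=
  fderiv ℝ (fun z => fderiv ℝ φ z (EuclideanSpace.single j 1)) x (EuclideanSpace.single i 1)

/-- `μp, μn` represent the (signed) second derivative measures `μ_{ij} = μp i j - μn i j`
of the function `g`. -/
def IsSecondDerivMeasures (d : ℕ) (g : EuclideanSpace ℝ (Fin d) → ℝ)
    (μp μn : Fin d → Fin d → Measure (EuclideanSpace ℝ (Fin d))) : Prop :=
  (∀ i j, IsLocallyFiniteMeasure (μp i j)) ∧ (∀ i j, IsLocallyFiniteMeasure (μn i j)) ∧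
  ∀ i j, ∀ φ : EuclideanSpace ℝ (Fin d) → ℝ, ContDiff ℝ (⊤ : ℕ∞) φ → HasCompactSupport φ →
    (∫ x, φ x ∂(μp i j)) - (∫ x, φ x ∂(μn i j)) = ∫ x, g x * secondPartial d φ i j x

/-!
Pushing the second derivative measures of `f ∘ S` forward along `S` and testing against `ψ` gives
`∫ f(Sx) ∂ᵢ∂ⱼ(ψ ∘ S)(x) dx`. The chain rule writes `∂ᵢ∂ⱼ(ψ ∘ S)` as
`∑ₖₗ Sₖᵢ Sₗⱼ (∂ₖ∂ₗψ) ∘ S`, and the linear change of variables then produces the factor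
`1 / |det S|`, so the pushed-forward measures and `|det S|⁻¹ Sᵀ μ S` have the same integrals
against test functions. Such integrals determine a linear combination of locally finite measures
on bounded sets: its density with respect to the sum of these measures is a locally integrable
function orthogonal to every test function, hence zero almost everywhere.
-/

open scoped ContDiff

section Uniqueness

variable {E : Type*} [NormedAddCommGroup E] [NormedSpace ℝ E] [FiniteDimensional ℝ E]
  [MeasurableSpace E] [BorelSpace E] {ι : Type*} [Fintype ι] {A : Set E}

theorem sum_mul_measureReal_eq_zero_of_integral_contDiff (c : ι → ℝ) (ν : ι → Measure E)
    [∀ a, IsFiniteMeasureOnCompacts (ν a)]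
    (h : ∀ ψ : E → ℝ, ContDiff ℝ ∞ ψ → HasCompactSupport ψ → ∑ a, c a * ∫ x, ψ x ∂(ν a) = 0)
    (hA : Bornology.IsBounded A) :
    ∑ a, c a * (ν a).real A = 0 := by
  have : ProperSpace E := FiniteDimensional.proper_real E
  let σ := Measure.sum ν
  let ρ (a : ι) (x : E) : ℝ := ((ν a).rnDeriv σ x).toReal
  have hac (a : ι) : ν a ≪ σ := Measure.absolutelyContinuous_sum_right a .rfl
  have hρ (a : ι) {B : Set E} (hB : Bornology.IsBounded B) :
      IntegrableOn (fun x => c a * ρ a x) B σ :=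
    (Measure.integrableOn_toReal_rnDeriv hB.measure_lt_top.ne).const_mul _
  have hρ_test (ψ : E → ℝ) (hψ : ContDiff ℝ ∞ ψ) (hψc : HasCompactSupport ψ) :
      ∫ x, ψ x • ∑ a, c a * ρ a x ∂σ = 0 := by
    have hint (a : ι) : Integrable (fun x => ρ a x • ψ x) σ :=
      (integrable_rnDeriv_smul_iff (hac a)).2 (hψ.continuous.integrable_of_hasCompactSupport hψc)
    calc ∫ x, ψ x • ∑ a, c a * ρ a x ∂σ
        = ∫ x, ∑ a, c a * (ρ a x • ψ x) ∂σ := by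
          simp only [smul_eq_mul, Finset.mul_sum, mul_comm, mul_left_comm]
      _ = ∑ a, c a * ∫ x, ψ x ∂(ν a) := by
          rw [integral_finsetSum _ fun a _ => (hint a).const_mul _]
          simp_rw [integral_const_mul, ρ, integral_rnDeriv_smul (hac _)]
      _ = 0 := h ψ hψ hψc
  have hρ_zero : ∀ᵐ x ∂σ, ∑ a, c a * ρ a x = 0 :=
    ae_eq_zero_of_integral_contDiff_smul_eq_zero
      (locallyIntegrable_iff.2 fun _ hK => integrable_finsetSum _ fun a _ => hρ a hK.isBounded)
      hρ_test
  calc ∑ a, c a * (ν a).real A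
      = ∫ x in A, ∑ a, c a * ρ a x ∂σ := by
        rw [integral_finsetSum _ fun a _ => hρ a hA]
        simp_rw [integral_const_mul, ρ, Measure.setIntegral_toReal_rnDeriv (hac _)]
    _ = 0 := integral_eq_zero_of_ae (ae_restrict_of_ae hρ_zero)

theorem sum_mul_measureReal_sub_eq_zero_of_integral_contDiff (c : ι → ℝ) (p n : ι → Measure E)
    [∀ a, IsFiniteMeasureOnCompacts (p a)] [∀ a, IsFiniteMeasureOnCompacts (n a)]
    (h : ∀ ψ : E → ℝ, ContDiff ℝ ∞ ψ → HasCompactSupport ψ →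
      ∑ a, c a * (∫ x, ψ x ∂(p a) - ∫ x, ψ x ∂(n a)) = 0)
    (hA : Bornology.IsBounded A) :
    ∑ a, c a * ((p a).real A - (n a).real A) = 0 := by
  have : ∀ s, IsFiniteMeasureOnCompacts (Sum.elim p n s) := by
    rintro (a | a) <;> simp only [Sum.elim_inl, Sum.elim_inr] <;> infer_instance
  have hsum (u v : ι → ℝ) : ∑ a, c a * (u a - v a) =
      ∑ s, Sum.elim c (-c) s * Sum.elim u v s := by
    simp [Fintype.sum_sum_type, mul_sub, Finset.sum_sub_distrib, ← sub_eq_add_neg]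
  rw [hsum, ← sum_mul_measureReal_eq_zero_of_integral_contDiff (Sum.elim c (-c)) (Sum.elim p n)
    (fun ψ hψ hψc => ?_) hA]
  · exact Finset.sum_congr rfl (by rintro (a | a) - <;> rfl)
  · rw [← h ψ hψ hψc, hsum]
    exact Finset.sum_congr rfl (by rintro (a | a) - <;> rfl)

theorem measureReal_sub_eq_sum_of_integral_contDiff (c : ι → ℝ) (p n : ι → Measure E)
    (p₀ n₀ : Measure E) [IsFiniteMeasureOnCompacts p₀] [IsFiniteMeasureOnCompacts n₀]
    [∀ a, IsFiniteMeasureOnCompacts (p a)] [∀ a, IsFiniteMeasureOnCompacts (n a)]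
    (h : ∀ ψ : E → ℝ, ContDiff ℝ ∞ ψ → HasCompactSupport ψ →
      ∫ x, ψ x ∂p₀ - ∫ x, ψ x ∂n₀ = ∑ a, c a * (∫ x, ψ x ∂(p a) - ∫ x, ψ x ∂(n a)))
    (hA : Bornology.IsBounded A) :
    p₀.real A - n₀.real A = ∑ a, c a * ((p a).real A - (n a).real A) := by
  have (ν₀ : Measure E) (ν : ι → Measure E) [IsFiniteMeasureOnCompacts ν₀]
      [∀ a, IsFiniteMeasureOnCompacts (ν a)] (o : Option ι) :
      IsFiniteMeasureOnCompacts (o.elim ν₀ ν) := by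
    cases o <;> simp only [Option.elim] <;> infer_instance
  have hcombination := sum_mul_measureReal_sub_eq_zero_of_integral_contDiff
    (fun o : Option ι => o.elim (-1) c) (·.elim p₀ p) (·.elim n₀ n)
    (fun ψ hψ hψc => by simp [Fintype.sum_option, h ψ hψ hψc]) hA
  simp only [Fintype.sum_option, Option.elim] at hcombination
  linarith

end Uniqueness

section LinearChangeOfVariables

theorem integral_comp_linearMap {E F : Type*} [NormedAddCommGroup E] [NormedSpace ℝ E]
    [FiniteDimensional ℝ E] [MeasurableSpace E] [BorelSpace E] [NormedAddCommGroup F]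
    [NormedSpace ℝ F] (μ : Measure E) [μ.IsAddHaarMeasure] {L : E →ₗ[ℝ] E}
    (hL : LinearMap.det L ≠ 0) (g : E → F) :
    ∫ x, g (L x) ∂μ = |(LinearMap.det L)⁻¹| • ∫ x, g x ∂μ := by
  let e := (L.equivOfDetNeZero hL).toContinuousLinearEquiv.toHomeomorph.toMeasurableEquiv
  calc ∫ x, g (L x) ∂μ = ∫ x, g x ∂(μ.map L) := (integral_map_equiv e g).symm
    _ = |(LinearMap.det L)⁻¹| • ∫ x, g x ∂μ := by
      rw [Measure.map_linearMap_addHaar_eq_smul_addHaar μ hL, integral_smul_measure,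
        ENNReal.toReal_ofReal (abs_nonneg _)]

/-- The linear automorphism `x ↦ S x` of Euclidean space given by an invertible matrix `S`, as a
continuous linear equivalence, so that measures and test functions can be transported along it. -/
noncomputable def euclideanEquivOfIsUnitDet {ι : Type*} [Fintype ι] [DecidableEq ι]
    (S : Matrix ι ι ℝ) (hS : IsUnit S.det) : EuclideanSpace ℝ ι ≃L[ℝ] EuclideanSpace ℝ ι :=
  ((Matrix.toLpLin 2 2 S).equivOfDetNeZero
    (by rw [LinearMap.det_toLpLin]; exact hS.ne_zero)).toContinuousLinearEquiv

theorem integral_comp_euclideanEquivOfIsUnitDet {ι F : Type*} [Fintype ι] [DecidableEq ι]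
    [NormedAddCommGroup F] [NormedSpace ℝ F] (S : Matrix ι ι ℝ) (hS : IsUnit S.det)
    (g : EuclideanSpace ℝ ι → F) :
    ∫ x, g (euclideanEquivOfIsUnitDet S hS x) = (1 / |S.det|) • ∫ x, g x := by
  have hdet := LinearMap.det_toLpLin 2 S
  rw [one_div, ← abs_inv, ← hdet]
  exact integral_comp_linearMap volume (hdet ▸ hS.ne_zero) g

end LinearChangeOfVariables

section SecondPartial

variable {d : ℕ} {ψ : EuclideanSpace ℝ (Fin d) → ℝ}

theorem secondPartial_eq_fderiv_fderiv (hψ : ContDiff ℝ 2 ψ) (i j : Fin d)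
    (x : EuclideanSpace ℝ (Fin d)) :
    secondPartial d ψ i j x =
      fderiv ℝ (fderiv ℝ ψ) x (EuclideanSpace.single i 1) (EuclideanSpace.single j 1) := by
  have hdiff : DifferentiableAt ℝ (fderiv ℝ ψ) x :=
    ((hψ.fderiv_right (m := 1) (by norm_num)).differentiable one_ne_zero) x
  rw [secondPartial, fderiv_clm_apply hdiff (differentiableAt_const _)]
  simp

theorem continuous_secondPartial (hψ : ContDiff ℝ 2 ψ) (i j : Fin d) :
    Continuous (secondPartial d ψ i j) := by
  have hcont : Continuous (fderiv ℝ (fderiv ℝ ψ)) :=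
    (hψ.fderiv_right (m := 1) (by norm_num)).continuous_fderiv one_ne_zero
  rw [funext (secondPartial_eq_fderiv_fderiv hψ i j)]
  exact (hcont.clm_apply continuous_const).clm_apply continuous_const

theorem hasCompactSupport_secondPartial (hψ : HasCompactSupport ψ) (i j : Fin d) :
    HasCompactSupport (secondPartial d ψ i j) :=
  (hψ.fderiv_apply ℝ _).fderiv_apply ℝ _

theorem integrable_mul_secondPartial {f : EuclideanSpace ℝ (Fin d) → ℝ}
    {μ : Measure (EuclideanSpace ℝ (Fin d))} (hf : LocallyIntegrable f μ)
    (hψ : ContDiff ℝ 2 ψ) (hψc : HasCompactSupport ψ) (i j : Fin d) :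
    Integrable (fun x => f x * secondPartial d ψ i j x) μ :=
  hf.integrable_smul_right_of_hasCompactSupport (continuous_secondPartial hψ i j)
    (hasCompactSupport_secondPartial hψc i j)

theorem toLpLin_single_eq_sum {m n 𝕜 : Type*} [Fintype m] [DecidableEq m] [Fintype n]
    [DecidableEq n] [RCLike 𝕜] (S : Matrix m n 𝕜) (j : n) :
    Matrix.toLpLin 2 2 S (EuclideanSpace.single j 1) =
      ∑ k, S k j • EuclideanSpace.single k (1 : 𝕜) := by
  ext k
  simp [Matrix.toLpLin_apply, Pi.single_apply]

theorem secondPartial_comp_toLpLin {m : ℕ} (hψ : ContDiff ℝ 2 ψ) (S : Matrix (Fin d) (Fin m) ℝ)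
    (i j : Fin m) (x : EuclideanSpace ℝ (Fin m)) :
    secondPartial m (ψ ∘ Matrix.toLpLin 2 2 S) i j x =
      ∑ a : Fin d × Fin d, S a.1 i * S a.2 j *
        secondPartial d ψ a.1 a.2 (Matrix.toLpLin 2 2 S x) := by
  let L := (Matrix.toLpLin 2 2 S).toContinuousLinearMap
  have hcomp (v w : EuclideanSpace ℝ (Fin m)) :
      fderiv ℝ (fderiv ℝ (ψ ∘ L)) x v w = fderiv ℝ (fderiv ℝ ψ) (L x) (L v) (L w) := by
    simpa [iteratedFDeriv_two_apply] using
      DFunLike.congr_fun (L.iteratedFDeriv_comp_right hψ x (i := 2) le_rfl) ![v, w]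
  have hL (k : Fin m) : L (EuclideanSpace.single k 1) =
      ∑ l, S l k • EuclideanSpace.single l (1 : ℝ) := toLpLin_single_eq_sum S k
  calc secondPartial m (ψ ∘ L) i j x
      = fderiv ℝ (fderiv ℝ ψ) (L x) (L (EuclideanSpace.single i 1))
          (L (EuclideanSpace.single j 1)) := by
        rw [secondPartial_eq_fderiv_fderiv (hψ.comp L.contDiff), hcomp]
    _ = ∑ a : Fin d × Fin d, S a.1 i * S a.2 j * secondPartial d ψ a.1 a.2 (L x) := by
        simp [hL, secondPartial_eq_fderiv_fderiv hψ, Fintype.sum_prod_type_right,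
          Finset.mul_sum, mul_assoc, mul_left_comm (S _ j)]

theorem integral_comp_mul_secondPartial_comp {f : EuclideanSpace ℝ (Fin d) → ℝ}
    (hf : LocallyIntegrable f) (hψ : ContDiff ℝ 2 ψ) (hψc : HasCompactSupport ψ)
    (S : Matrix (Fin d) (Fin d) ℝ) (hS : IsUnit S.det) (i j : Fin d) :
    ∫ x, f (euclideanEquivOfIsUnitDet S hS x) *
        secondPartial d (ψ ∘ euclideanEquivOfIsUnitDet S hS) i j x =
      ∑ a : Fin d × Fin d, 1 / |S.det| * (S a.1 i * S a.2 j) *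
        ∫ x, f x * secondPartial d ψ a.1 a.2 x := by
  let g (y : EuclideanSpace ℝ (Fin d)) : ℝ :=
    ∑ a : Fin d × Fin d, S a.1 i * S a.2 j * (f y * secondPartial d ψ a.1 a.2 y)
  have hchain (x : EuclideanSpace ℝ (Fin d)) :
      f (euclideanEquivOfIsUnitDet S hS x) *
        secondPartial d (ψ ∘ euclideanEquivOfIsUnitDet S hS) i j x =
      g (euclideanEquivOfIsUnitDet S hS x) := by
    refine (congrArg (_ * ·) (secondPartial_comp_toLpLin hψ S i j x)).trans ?_
    rw [Finset.mul_sum]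
    exact Finset.sum_congr rfl fun a _ => mul_left_comm _ _ _
  calc _ = ∫ x, g (euclideanEquivOfIsUnitDet S hS x) := by simp_rw [hchain]
    _ = 1 / |S.det| * ∫ y, g y := integral_comp_euclideanEquivOfIsUnitDet S hS g
    _ = _ := by
      rw [integral_finsetSum _ fun a _ =>
        (integrable_mul_secondPartial hf hψ hψc a.1 a.2).const_mul _]
      simp_rw [integral_const_mul, Finset.mul_sum, mul_assoc]

end SecondPartial

theorem IsSecondDerivMeasures.integral_map_sub_integral_map {d : ℕ}
    {f : EuclideanSpace ℝ (Fin d) → ℝ} (hf : LocallyIntegrable f)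
    {S : Matrix (Fin d) (Fin d) ℝ} (hS : IsUnit S.det)
    {μp μn μSp μSn : Fin d → Fin d → Measure (EuclideanSpace ℝ (Fin d))}
    (hμ : IsSecondDerivMeasures d f μp μn)
    (hμS : IsSecondDerivMeasures d (f ∘ euclideanEquivOfIsUnitDet S hS) μSp μSn)
    (i j : Fin d) {ψ : EuclideanSpace ℝ (Fin d) → ℝ} (hψ : ContDiff ℝ ∞ ψ)
    (hψc : HasCompactSupport ψ) :
    ∫ x, ψ x ∂((μSp i j).map (euclideanEquivOfIsUnitDet S hS)) -
        ∫ x, ψ x ∂((μSn i j).map (euclideanEquivOfIsUnitDet S hS)) =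
      ∑ a : Fin d × Fin d, 1 / |S.det| * (S a.1 i * S a.2 j) *
        (∫ x, ψ x ∂(μp a.1 a.2) - ∫ x, ψ x ∂(μn a.1 a.2)) := by
  let L := euclideanEquivOfIsUnitDet S hS
  have hmap (ν : Measure (EuclideanSpace ℝ (Fin d))) : ∫ x, ψ x ∂(ν.map L) = ∫ x, (ψ ∘ L) x ∂ν :=
    integral_map_equiv L.toHomeomorph.toMeasurableEquiv ψ
  rw [hmap, hmap, hμS.2.2 i j (ψ ∘ L) (hψ.comp L.contDiff) (hψc.comp_homeomorph L.toHomeomorph)]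
  simp_rw [hμ.2.2 _ _ ψ hψ hψc]
  exact integral_comp_mul_secondPartial_comp hf (hψ.of_le (by norm_cast)) hψc S hS i j

theorem transpose_mul_mul_apply {m n R : Type*} [Fintype m] [CommSemiring R] (S : Matrix m n R)
    (M : Matrix m m R) (i j : n) :
    (S.transpose * M * S) i j = ∑ a : m × m, S a.1 i * S a.2 j * M a.1 a.2 := by
  simp only [Matrix.mul_apply, Matrix.transpose_apply, Finset.sum_mul,
    Fintype.sum_prod_type_right, mul_right_comm]

theorem second_deriv_measure_change_of_variables_general (d : ℕ)
    (f : EuclideanSpace ℝ (Fin d) → ℝ) (hf : LocallyIntegrable f)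
    (S : Matrix (Fin d) (Fin d) ℝ) (hS : IsUnit S.det)
    (μp μn μSp μSn : Fin d → Fin d → Measure (EuclideanSpace ℝ (Fin d)))
    (hμ : IsSecondDerivMeasures d f μp μn)
    (hμS : IsSecondDerivMeasures d
      (fun x => f (WithLp.toLp 2 (S.mulVec x) : EuclideanSpace ℝ (Fin d))) μSp μSn)
    (A : Set (EuclideanSpace ℝ (Fin d))) (hAbdd : Bornology.IsBounded A) :
    (Matrix.of fun i j =>
        ((μSp i j) ((fun y : EuclideanSpace ℝ (Fin d) =>
          (WithLp.toLp 2 (S.mulVec y) : EuclideanSpace ℝ (Fin d))) ⁻¹' A)).toReal -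
        ((μSn i j) ((fun y : EuclideanSpace ℝ (Fin d) =>
          (WithLp.toLp 2 (S.mulVec y) : EuclideanSpace ℝ (Fin d))) ⁻¹' A)).toReal) =
      (1 / |S.det|) •
        (S.transpose *
          (Matrix.of fun i j => ((μp i j) A).toReal - ((μn i j) A).toReal) * S) := by
  have ⟨_, _, _⟩ := hμ
  have ⟨_, _, _⟩ := hμS
  let L := euclideanEquivOfIsUnitDet S hS
  have hfin (ν : Measure (EuclideanSpace ℝ (Fin d))) [IsFiniteMeasureOnCompacts ν] :
      IsFiniteMeasureOnCompacts (ν.map L) :=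
    Measure.IsFiniteMeasureOnCompacts.map ν L.toHomeomorph
  have hmap (ν : Measure (EuclideanSpace ℝ (Fin d))) : (ν.map L).real A = (ν (L ⁻¹' A)).toReal :=
    congrArg _ (L.toHomeomorph.toMeasurableEquiv.map_apply A)
  ext i j
  calc (μSp i j (L ⁻¹' A)).toReal - (μSn i j (L ⁻¹' A)).toReal
      = ∑ a : Fin d × Fin d,
          1 / |S.det| * (S a.1 i * S a.2 j) * ((μp a.1 a.2).real A - (μn a.1 a.2).real A) := by
        rw [← hmap, ← hmap]
        exact measureReal_sub_eq_sum_of_integral_contDiff _ (fun a : Fin d × Fin d => μp a.1 a.2)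
          (fun a => μn a.1 a.2) _ _
          (fun ψ => hμ.integral_map_sub_integral_map hf hS hμS i j) hAbdd
    _ = _ := by
        rw [Matrix.smul_apply, transpose_mul_mul_apply, smul_eq_mul, Finset.mul_sum]
        simp only [Matrix.of_apply, measureReal_def, mul_assoc]

theorem second_deriv_measure_change_of_variables (d : ℕ)
    (f : EuclideanSpace ℝ (Fin d) → ℝ) (hf : ConvexOn ℝ Set.univ f)
    (S : Matrix (Fin d) (Fin d) ℝ) (hS : IsUnit S.det)
    (μp μn μSp μSn : Fin d → Fin d → Measure (EuclideanSpace ℝ (Fin d)))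
    (hμ : IsSecondDerivMeasures d f μp μn)
    (hμS : IsSecondDerivMeasures d
      (fun x => f (WithLp.toLp 2 (S.mulVec x) : EuclideanSpace ℝ (Fin d))) μSp μSn)
    (A : Set (EuclideanSpace ℝ (Fin d))) (hA : MeasurableSet A)
    (hAbdd : Bornology.IsBounded A) :
    (Matrix.of fun i j =>
        ((μSp i j) ((fun y : EuclideanSpace ℝ (Fin d) =>
          (WithLp.toLp 2 (S.mulVec y) : EuclideanSpace ℝ (Fin d))) ⁻¹' A)).toReal -
        ((μSn i j) ((fun y : EuclideanSpace ℝ (Fin d) =>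
          (WithLp.toLp 2 (S.mulVec y) : EuclideanSpace ℝ (Fin d))) ⁻¹' A)).toReal) =
      (1 / |S.det|) •
        (S.transpose *
          (Matrix.of fun i j => ((μp i j) A).toReal - ((μn i j) A).toReal) * S) :=
  second_deriv_measure_change_of_variables_general d f
    hf.locallyLipschitz.continuous.locallyIntegrable S hS μp μn μSp μSn hμ hμS A hAbdd
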